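/- arXiv:1909.04699 — 2 statements merged into one kernel-verified Lean document; each statement's English description precedes it below -/
import Mathlib

section
/- Let n ≥ 1 be an integer. There exists a constant C > 0 depending only on n such that for every half-space H ⊆ ℝⁿ, all x, y ∈ H, every α ∈ (0,1), every r > 0 and every t > 0: ∫_{H \ B((1−α)x + αy, r)} k_H(αt, x, z) · k_H((1−α)t, z, y) dz ≤ C · k_H(t, x, y) · exp(−r²/(8α(1−α)t)) / (α(1−α)). -/
open MeasureTheory Real
open scoped RealInnerProductSpace

/-- The global Gaussian heat kernel `k(t,x,y) = (4πt)^(−n/2) exp(−|x−y|²/(4t))` on ℝⁿ. -/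
noncomputable def heatKernel (n : ℕ) (t : ℝ) (x y : EuclideanSpace ℝ (Fin n)) : ℝ :=
  (4 * π * t) ^ (-(n : ℝ) / 2) * Real.exp (-‖x - y‖ ^ 2 / (4 * t))

/-- The Dirichlet heat kernel of the half-space `H = {z : ⟪z − p, u⟫ > 0}` (where `‖u‖ = 1`):
`k_H(t,x,y) = (1 − exp(−δ_H(x)δ_H(y)/t)) k(t,x,y)` with `δ_H(z) = ⟪z − p, u⟫`. -/
noncomputable def halfSpaceKernel (n : ℕ) (p u : EuclideanSpace ℝ (Fin n)) (t : ℝ)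
    (x y : EuclideanSpace ℝ (Fin n)) : ℝ :=
  (1 - Real.exp (-(⟪x - p, u⟫ * ⟪y - p, u⟫) / t)) * heatKernel n t x y

/-!
Write `m = (1 - α) x + α y` and `s = α (1 - α) t`. Completing the square gives
`k(αt, x, z) k((1 - α)t, z, y) = k(t, x, y) k(s, z, m)`, so only the boundary factors
`1 - exp(-δ(x) δ(y) / t) ≍ min(1, δ(x) δ(y) / t)` need care. Heights are affine, hence
`δ(z) ≤ (1 - α) δ(x) + α δ(y) + |z - m|`, which bounds the product of the two factors at `z` by the
factor of `(x, y)` times `2 (1 + |z - m| / √t)² / (α (1 - α))`. Outside `B(m, r)` the Gaussian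
`k(s, z, m)` absorbs this polynomial weight and releases `exp(-r² / (8s))`, while still being
dominated by a multiple of `k(4s, z, m)`, whose integral is `1`.
-/

section BoundaryFactor

/-- The ratio of the half-space Dirichlet heat kernel to the global one at time `t`, for two points
at distances `a` and `b` from the boundary hyperplane. -/
noncomputable def boundaryFactor (t a b : ℝ) : ℝ :=
  1 - rexp (-(a * b) / t)

variable {t a b c d α β : ℝ}

lemma boundaryFactor_nonneg (ht : 0 ≤ t) (ha : 0 ≤ a) (hb : 0 ≤ b) : 0 ≤ boundaryFactor t a b := by
  rw [boundaryFactor, sub_nonneg, exp_le_one_iff, neg_div, neg_nonpos]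
  positivity

lemma boundaryFactor_le_min_one (t a b : ℝ) : boundaryFactor t a b ≤ min 1 (a * b / t) := by
  rw [boundaryFactor, neg_div]
  exact le_min (sub_le_self 1 (exp_pos _).le) (sub_le_comm.1 (one_sub_le_exp_neg _))

lemma min_one_le_two_mul_one_sub_exp_neg {v : ℝ} (hv : 0 ≤ v) :
    min 1 v ≤ 2 * (1 - rexp (-v)) := by
  have exp_le : rexp (-v) ≤ (1 + v)⁻¹ := by
    rw [exp_neg, add_comm]
    exact inv_anti₀ (by linarith) (add_one_le_exp v)
  have min_le : min 1 v ≤ 2 * (1 - (1 + v)⁻¹) := by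
    have : 2 * (1 - (1 + v)⁻¹) = 2 * v / (1 + v) := by field_simp; ring
    rw [this, le_div_iff₀ (by linarith)]
    rcases le_total 1 v with h | h
    · rw [min_eq_left h]; linarith
    · rw [min_eq_right h]; nlinarith
  linarith

lemma min_one_le_two_mul_boundaryFactor (ht : 0 ≤ t) (ha : 0 ≤ a) (hb : 0 ≤ b) :
    min 1 (a * b / t) ≤ 2 * boundaryFactor t a b := by
  rw [boundaryFactor, neg_div]
  exact min_one_le_two_mul_one_sub_exp_neg (by positivity)

lemma min_one_mul_min_one_le_mul (hα : 0 < α) (hβ : 0 < β) (hαβ : α + β = 1) (ha : 0 ≤ a)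
    (hb : 0 ≤ b) (hc : 0 ≤ c) (hd : 0 ≤ d) (hcd : c ≤ β * a + α * b + d) :
    min 1 (a * c / α) * min 1 (c * b / β) ≤ a * b * ((1 + d) ^ 2 / (α * β)) := by
  wlog hba : b ≤ a generalizing a b α β
  · have swapped := this hβ hα (by linarith) hb ha (by linarith) (by linarith)
    rwa [mul_comm b c, mul_comm c a, mul_comm b a, mul_comm β α, mul_comm (min _ _)] at swapped
  have average_le : β * a + α * b ≤ a := by nlinarith
  rcases le_total a 1 with ha1 | ha1
  · have hc1 : c ≤ 1 + d := by linarith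
    calc min 1 (a * c / α) * min 1 (c * b / β)
        ≤ a * c / α * (c * b / β) := by gcongr <;> exact min_le_right _ _
      _ = a * b * (c ^ 2 / (α * β)) := by ring
      _ ≤ a * b * ((1 + d) ^ 2 / (α * β)) := by gcongr
  · -- Here `a * c / α` may be as large as `a ^ 2`, so the first factor is bounded by `1` instead.
    have hc1 : c ≤ a * (1 + d) := by nlinarith
    calc min 1 (a * c / α) * min 1 (c * b / β)
        ≤ 1 * (c * b / β) := by gcongr <;> simp
      _ ≤ a * (1 + d) * b / β := by rw [one_mul]; gcongr
      _ = a * b * (α * (1 + d) / (α * β)) := by field_simp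
      _ ≤ a * b * ((1 + d) ^ 2 / (α * β)) := by gcongr; nlinarith

lemma min_one_mul_min_one_le (hα : 0 < α) (hβ : 0 < β) (hαβ : α + β = 1) (ha : 0 ≤ a)
    (hb : 0 ≤ b) (hc : 0 ≤ c) (hd : 0 ≤ d) (hcd : c ≤ β * a + α * b + d) :
    min 1 (a * c / α) * min 1 (c * b / β) ≤ min 1 (a * b) * ((1 + d) ^ 2 / (α * β)) := by
  have one_le : 1 ≤ (1 + d) ^ 2 / (α * β) := by
    rw [one_le_div₀ (by positivity)]
    nlinarith
  have product_le_one : min 1 (a * c / α) * min 1 (c * b / β) ≤ 1 :=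
    mul_le_one₀ (min_le_left _ _) (by positivity) (min_le_left _ _)
  rw [min_mul_of_nonneg 1 (a * b) (by positivity), one_mul]
  exact le_min (product_le_one.trans one_le)
    (min_one_mul_min_one_le_mul hα hβ hαβ ha hb hc hd hcd)

lemma boundaryFactor_mul_boundaryFactor_le (hα : 0 < α) (hβ : 0 < β) (hαβ : α + β = 1)
    (ht : 0 < t) (ha : 0 ≤ a) (hb : 0 ≤ b) (hc : 0 ≤ c) (hd : 0 ≤ d)
    (hcd : c ≤ β * a + α * b + d) :
    boundaryFactor (α * t) a c * boundaryFactor (β * t) c b ≤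
      2 * boundaryFactor t a b * ((1 + d / √t) ^ 2 / (α * β)) := by
  have rescale (v w γ : ℝ) : v * w / (γ * t) = v / √t * (w / √t) / γ := by
    rw [div_mul_div_comm, mul_self_sqrt ht.le, div_div, mul_comm t]
  have rescaled_hcd : c / √t ≤ β * (a / √t) + α * (b / √t) + d / √t := by
    rw [← mul_div_assoc, ← mul_div_assoc, ← add_div, ← add_div]
    gcongr
  calc boundaryFactor (α * t) a c * boundaryFactor (β * t) c b
      ≤ min 1 (a * c / (α * t)) * min 1 (c * b / (β * t)) := by
        gcongr
        · exact boundaryFactor_nonneg (by positivity) hc hb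
        · exact boundaryFactor_le_min_one _ _ _
        · exact boundaryFactor_le_min_one _ _ _
    _ = min 1 (a / √t * (c / √t) / α) * min 1 (c / √t * (b / √t) / β) := by
        rw [rescale, rescale]
    _ ≤ min 1 (a / √t * (b / √t)) * ((1 + d / √t) ^ 2 / (α * β)) :=
        min_one_mul_min_one_le hα hβ hαβ (by positivity) (by positivity) (by positivity)
          (by positivity) rescaled_hcd
    _ = min 1 (a * b / t) * ((1 + d / √t) ^ 2 / (α * β)) := by
        rw [div_mul_div_comm, mul_self_sqrt ht.le]
    _ ≤ 2 * boundaryFactor t a b * ((1 + d / √t) ^ 2 / (α * β)) := by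
        gcongr
        exact min_one_le_two_mul_boundaryFactor ht.le ha hb

end BoundaryFactor

section InnerProductSpace

variable {E : Type*} [NormedAddCommGroup E] [InnerProductSpace ℝ E] {α β : ℝ}

lemma mul_norm_sub_sq_add_mul_norm_sub_sq (hαβ : α + β = 1) (x y z : E) :
    β * ‖x - z‖ ^ 2 + α * ‖z - y‖ ^ 2 =
      α * β * ‖x - y‖ ^ 2 + ‖z - (β • x + α • y)‖ ^ 2 := by
  obtain rfl := eq_sub_of_add_eq' hαβ
  have hxy : x - y = (x - z) + (z - y) := by abel
  have hz : z - ((1 - α) • x + α • y) = α • (z - y) - (1 - α) • (x - z) := by module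
  rw [hxy, hz, norm_add_sq_real, norm_sub_sq_real (α • _), norm_smul, norm_smul, mul_pow, mul_pow,
    norm_eq_abs, norm_eq_abs, sq_abs, sq_abs, real_inner_smul_left, real_inner_smul_right,
    real_inner_comm (x - z)]
  ring

lemma inner_sub_le_add_norm_sub (hαβ : α + β = 1) {u : E} (hu : ‖u‖ = 1) (p x y z : E) :
    ⟪z - p, u⟫ ≤ β * ⟪x - p, u⟫ + α * ⟪y - p, u⟫ + ‖z - (β • x + α • y)‖ := by
  obtain rfl := eq_sub_of_add_eq' hαβ
  set m := (1 - α) • x + α • y with hm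
  calc ⟪z - p, u⟫ = ⟪(1 - α) • (x - p) + α • (y - p) + (z - m), u⟫ := by
        congr 1
        rw [hm]
        module
    _ = (1 - α) * ⟪x - p, u⟫ + α * ⟪y - p, u⟫ + ⟪z - m, u⟫ := by
        rw [inner_add_left, inner_add_left, real_inner_smul_left, real_inner_smul_left]
    _ ≤ (1 - α) * ⟪x - p, u⟫ + α * ⟪y - p, u⟫ + ‖z - m‖ := by
        gcongr
        simpa [hu] using real_inner_le_norm (z - m) u

end InnerProductSpace

section HeatKernel

variable {n : ℕ} {t α β : ℝ}

lemma heatKernel_nonneg (ht : 0 ≤ t) (x y : EuclideanSpace ℝ (Fin n)) :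
    0 ≤ heatKernel n t x y := by
  unfold heatKernel
  positivity

lemma integral_heatKernel (ht : 0 < t) (y : EuclideanSpace ℝ (Fin n)) :
    ∫ x, heatKernel n t x y = 1 := by
  have gaussian : ∫ x : EuclideanSpace ℝ (Fin n), rexp (-‖x‖ ^ 2 / (4 * t)) =
      (4 * π * t) ^ ((n : ℝ) / 2) := by
    have := GaussianFourier.integral_rexp_neg_mul_sq_norm (V := EuclideanSpace ℝ (Fin n))
      (b := (4 * t)⁻¹) (by positivity)
    convert this using 2
    · simp only [neg_mul, div_eq_inv_mul, mul_neg]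
    · rw [div_inv_eq_mul]; ring
    · rw [finrank_euclideanSpace_fin]
  simp only [heatKernel]
  rw [integral_const_mul, integral_sub_right_eq_self (fun x ↦ rexp (-‖x‖ ^ 2 / (4 * t))) y,
    gaussian, ← rpow_add (by positivity), neg_div, neg_add_cancel, rpow_zero]

lemma integrable_heatKernel (ht : 0 < t) (y : EuclideanSpace ℝ (Fin n)) :
    Integrable fun x ↦ heatKernel n t x y :=
  integrable_of_integral_eq_one (integral_heatKernel ht y)

lemma heatKernel_mul_heatKernel (hα : 0 < α) (hβ : 0 < β) (hαβ : α + β = 1) (ht : 0 < t)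
    (x y z : EuclideanSpace ℝ (Fin n)) :
    heatKernel n (α * t) x z * heatKernel n (β * t) z y =
      heatKernel n t x y * heatKernel n (α * β * t) z (β • x + α • y) := by
  have prefactor : (4 * π * (α * t)) * (4 * π * (β * t)) = (4 * π * t) * (4 * π * (α * β * t)) := by
    ring
  have exponent : -‖x - z‖ ^ 2 / (4 * (α * t)) + -‖z - y‖ ^ 2 / (4 * (β * t)) =
      -‖x - y‖ ^ 2 / (4 * t) + -‖z - (β • x + α • y)‖ ^ 2 / (4 * (α * β * t)) := by
    have := mul_norm_sub_sq_add_mul_norm_sub_sq hαβ x y z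
    field_simp
    linarith
  simp only [heatKernel]
  rw [mul_mul_mul_comm, ← exp_add, ← mul_rpow (by positivity) (by positivity), prefactor, exponent,
    mul_rpow (by positivity) (by positivity), exp_add, mul_mul_mul_comm]

lemma heatKernel_eq_mul_heatKernel_mul {c : ℝ} (hc : 0 < c) (ht : 0 < t)
    (x y : EuclideanSpace ℝ (Fin n)) :
    heatKernel n t x y =
      c ^ ((n : ℝ) / 2) * rexp (-(1 - c⁻¹) * ‖x - y‖ ^ 2 / (4 * t)) * heatKernel n (c * t) x y := by
  have prefactor : (4 * π * t) ^ (-(n : ℝ) / 2) =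
      c ^ ((n : ℝ) / 2) * (4 * π * (c * t)) ^ (-(n : ℝ) / 2) := by
    rw [mul_left_comm, mul_rpow hc.le (by positivity), ← mul_assoc, ← rpow_add hc, neg_div,
      add_neg_cancel, rpow_zero, one_mul]
  have exponent : -‖x - y‖ ^ 2 / (4 * t) =
      -(1 - c⁻¹) * ‖x - y‖ ^ 2 / (4 * t) + -‖x - y‖ ^ 2 / (4 * (c * t)) := by
    field_simp
    ring
  simp only [heatKernel]
  rw [prefactor, exponent, exp_add, mul_mul_mul_comm]

lemma one_add_sq_le_mul_exp (w : ℝ) : (1 + w) ^ 2 ≤ 32 * rexp (w ^ 2 / 16) := by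
  nlinarith [add_one_le_exp (w ^ 2 / 16), sq_nonneg (1 - w)]

lemma one_add_sq_mul_heatKernel_le {r : ℝ} {x y : EuclideanSpace ℝ (Fin n)} (ht : 0 < t)
    (hr : 0 ≤ r) (hxy : r ≤ ‖x - y‖) :
    (1 + ‖x - y‖ / √t) ^ 2 * heatKernel n t x y ≤
      32 * 4 ^ ((n : ℝ) / 2) * rexp (-r ^ 2 / (8 * t)) * heatKernel n (4 * t) x y := by
  have weight : (1 + ‖x - y‖ / √t) ^ 2 ≤ 32 * rexp (‖x - y‖ ^ 2 / (16 * t)) := by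
    refine (one_add_sq_le_mul_exp _).trans_eq ?_
    rw [div_pow, sq_sqrt ht.le, div_div, mul_comm t]
  have exponent : ‖x - y‖ ^ 2 / (16 * t) + -(1 - (4 : ℝ)⁻¹) * ‖x - y‖ ^ 2 / (4 * t) =
      -‖x - y‖ ^ 2 / (8 * t) := by
    field_simp
    ring
  have kernel_nonneg := heatKernel_nonneg (by positivity : 0 ≤ 4 * t) x y
  rw [heatKernel_eq_mul_heatKernel_mul four_pos ht]
  calc (1 + ‖x - y‖ / √t) ^ 2 * (4 ^ ((n : ℝ) / 2) *
        rexp (-(1 - 4⁻¹) * ‖x - y‖ ^ 2 / (4 * t)) * heatKernel n (4 * t) x y)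
      ≤ 32 * rexp (‖x - y‖ ^ 2 / (16 * t)) * (4 ^ ((n : ℝ) / 2) *
        rexp (-(1 - 4⁻¹) * ‖x - y‖ ^ 2 / (4 * t)) * heatKernel n (4 * t) x y) := by gcongr
    _ = 32 * 4 ^ ((n : ℝ) / 2) * rexp (-‖x - y‖ ^ 2 / (8 * t)) * heatKernel n (4 * t) x y := by
        rw [← exponent, exp_add]
        ring
    _ ≤ 32 * 4 ^ ((n : ℝ) / 2) * rexp (-r ^ 2 / (8 * t)) * heatKernel n (4 * t) x y := by gcongr

lemma setIntegral_le_of_le_mul_heatKernel {s : Set (EuclideanSpace ℝ (Fin n))}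
    {f : EuclideanSpace ℝ (Fin n) → ℝ} {D : ℝ} (hs : MeasurableSet s) (ht : 0 < t) (hD : 0 ≤ D)
    (m : EuclideanSpace ℝ (Fin n))
    (f_nonneg : ∀ z ∈ s, 0 ≤ f z) (f_le : ∀ z ∈ s, f z ≤ D * heatKernel n t z m) :
    ∫ z in s, f z ≤ D := by
  have integrable := (integrable_heatKernel ht m).const_mul D
  calc ∫ z in s, f z ≤ ∫ z in s, D * heatKernel n t z m :=
        integral_mono_of_nonneg (ae_restrict_of_forall_mem hs f_nonneg) integrable.integrableOn
          (ae_restrict_of_forall_mem hs f_le)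
    _ ≤ ∫ z, D * heatKernel n t z m :=
        setIntegral_le_integral integrable
          (.of_forall fun z ↦ mul_nonneg hD (heatKernel_nonneg ht.le z m))
    _ = D := by rw [integral_const_mul, integral_heatKernel ht, mul_one]

end HeatKernel

section HalfSpace

variable {n : ℕ} {p u x y z : EuclideanSpace ℝ (Fin n)} {t r α β : ℝ}

lemma halfSpaceKernel_eq_boundaryFactor_mul (p u : EuclideanSpace ℝ (Fin n)) (t : ℝ)
    (x y : EuclideanSpace ℝ (Fin n)) :
    halfSpaceKernel n p u t x y =
      boundaryFactor t ⟪x - p, u⟫ ⟪y - p, u⟫ * heatKernel n t x y :=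
  rfl

lemma halfSpaceKernel_nonneg (ht : 0 ≤ t) (hx : 0 ≤ ⟪x - p, u⟫) (hy : 0 ≤ ⟪y - p, u⟫) :
    0 ≤ halfSpaceKernel n p u t x y :=
  mul_nonneg (boundaryFactor_nonneg ht hx hy) (heatKernel_nonneg ht x y)

lemma measurableSet_halfSpace (p u : EuclideanSpace ℝ (Fin n)) :
    MeasurableSet {z | 0 < ⟪z - p, u⟫} :=
  measurableSet_lt measurable_const (by fun_prop)

lemma halfSpaceKernel_mul_halfSpaceKernel_le (hu : ‖u‖ = 1) (hα : 0 < α) (hβ : 0 < β)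
    (hαβ : α + β = 1) (ht : 0 < t) (hx : 0 ≤ ⟪x - p, u⟫) (hy : 0 ≤ ⟪y - p, u⟫)
    (hz : 0 ≤ ⟪z - p, u⟫) :
    halfSpaceKernel n p u (α * t) x z * halfSpaceKernel n p u (β * t) z y ≤
      2 / (α * β) * halfSpaceKernel n p u t x y *
        ((1 + ‖z - (β • x + α • y)‖ / √t) ^ 2 * heatKernel n (α * β * t) z (β • x + α • y)) := by
  simp only [halfSpaceKernel_eq_boundaryFactor_mul]
  rw [mul_mul_mul_comm, heatKernel_mul_heatKernel hα hβ hαβ ht]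
  have factors_le := boundaryFactor_mul_boundaryFactor_le hα hβ hαβ ht hx hy hz (norm_nonneg _)
    (inner_sub_le_add_norm_sub hαβ hu p x y z)
  have kernels_nonneg := mul_nonneg (heatKernel_nonneg ht.le x y)
    (heatKernel_nonneg (by positivity : 0 ≤ α * β * t) z (β • x + α • y))
  exact (mul_le_mul_of_nonneg_right factors_le kernels_nonneg).trans_eq (by ring)

lemma halfSpaceKernel_mul_halfSpaceKernel_le_of_le_norm (hu : ‖u‖ = 1) (hα : 0 < α) (hβ : 0 < β)
    (hαβ : α + β = 1) (ht : 0 < t) (hr : 0 ≤ r) (hx : 0 ≤ ⟪x - p, u⟫) (hy : 0 ≤ ⟪y - p, u⟫)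
    (hz : 0 ≤ ⟪z - p, u⟫) (hzr : r ≤ ‖z - (β • x + α • y)‖) :
    halfSpaceKernel n p u (α * t) x z * halfSpaceKernel n p u (β * t) z y ≤
      64 * 4 ^ ((n : ℝ) / 2) * halfSpaceKernel n p u t x y *
        rexp (-r ^ 2 / (8 * (α * β * t))) / (α * β) *
        heatKernel n (4 * (α * β * t)) z (β • x + α • y) := by
  set m := β • x + α • y
  have hs : 0 < α * β * t := by positivity
  have hst : α * β * t ≤ t := mul_le_of_le_one_left ht.le (by nlinarith)
  have kernel_nonneg := halfSpaceKernel_nonneg ht.le hx hy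
  have heat_nonneg := heatKernel_nonneg hs.le z m
  calc halfSpaceKernel n p u (α * t) x z * halfSpaceKernel n p u (β * t) z y
      ≤ 2 / (α * β) * halfSpaceKernel n p u t x y *
          ((1 + ‖z - m‖ / √t) ^ 2 * heatKernel n (α * β * t) z m) :=
        halfSpaceKernel_mul_halfSpaceKernel_le hu hα hβ hαβ ht hx hy hz
    _ ≤ 2 / (α * β) * halfSpaceKernel n p u t x y *
          ((1 + ‖z - m‖ / √(α * β * t)) ^ 2 * heatKernel n (α * β * t) z m) := by gcongr
    _ ≤ 2 / (α * β) * halfSpaceKernel n p u t x y *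
          (32 * 4 ^ ((n : ℝ) / 2) * rexp (-r ^ 2 / (8 * (α * β * t))) *
            heatKernel n (4 * (α * β * t)) z m) :=
        mul_le_mul_of_nonneg_left (one_add_sq_mul_heatKernel_le hs hr hzr) (by positivity)
    _ = _ := by ring

end HalfSpace

/-- There is a constant `C > 0` depending only on `n` such that for every half-space
`H = {z : ⟪z − p, u⟫ > 0}` (with `‖u‖ = 1`), all `x, y ∈ H`, every `α ∈ (0,1)`, `r > 0`,
`t > 0`:
`∫_{H \ B((1−α)x+αy, r)} k_H(αt,x,z) k_H((1−α)t,z,y) dz`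
`≤ C k_H(t,x,y) exp(−r²/(8α(1−α)t)) / (α(1−α))`. -/
theorem stmt1 (n : ℕ) (hn : 1 ≤ n) :
    ∃ C : ℝ, 0 < C ∧
      ∀ p u : EuclideanSpace ℝ (Fin n), ‖u‖ = 1 →
      ∀ x y : EuclideanSpace ℝ (Fin n),
        0 < ⟪x - p, u⟫ → 0 < ⟪y - p, u⟫ →
      ∀ α : ℝ, α ∈ Set.Ioo (0 : ℝ) 1 →
      ∀ r t : ℝ, 0 < r → 0 < t →
      (∫ z in {z : EuclideanSpace ℝ (Fin n) | 0 < ⟪z - p, u⟫} \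
          Metric.ball ((1 - α) • x + α • y) r,
        halfSpaceKernel n p u (α * t) x z * halfSpaceKernel n p u ((1 - α) * t) z y)
      ≤ C * halfSpaceKernel n p u t x y *
          Real.exp (-r ^ 2 / (8 * α * (1 - α) * t)) / (α * (1 - α)) := by
  refine ⟨64 * 4 ^ ((n : ℝ) / 2), by positivity, ?_⟩
  rintro p u hu x y hx hy α ⟨hα, hα1⟩ r t hr ht
  have hβ : 0 < 1 - α := sub_pos.2 hα1
  have kernel_nonneg := halfSpaceKernel_nonneg ht.le hx.le hy.le
  rw [show 8 * α * (1 - α) * t = 8 * (α * (1 - α) * t) by ring]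
  refine setIntegral_le_of_le_mul_heatKernel (t := 4 * (α * (1 - α) * t))
    ((measurableSet_halfSpace p u).diff measurableSet_ball) (by positivity) (by positivity)
    ((1 - α) • x + α • y) (fun z hz ↦ ?_) (fun z hz ↦ ?_)
  · exact mul_nonneg (halfSpaceKernel_nonneg (by positivity) hx.le hz.1.le)
      (halfSpaceKernel_nonneg (by positivity) hz.1.le hy.le)
  · have hzr : r ≤ ‖z - ((1 - α) • x + α • y)‖ := by
      simpa only [Metric.mem_ball, not_lt, dist_eq_norm] using hz.2
    exact halfSpaceKernel_mul_halfSpaceKernel_le_of_le_norm hu hα hβ (add_sub_cancel α 1) ht hr.le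
      hx.le hy.le hz.1.le hzr
end

section
/- Fix real numbers α, β > 3/2. There exist constants c, C > 0 depending only on α and β such that for all a, b, t > 0: c · t^{α−1} · a^{β+1−α} · (a+b)^{1−α−β} · (1 + a(a+b)/t)^{α−2} · exp(−2a(a+b)/t) ≤ ∫_{1/2}^{1} (1−u)^(−α) (u + b/a)^(−β) exp(−(a+b)² u² / ((1−u) t (u + b/a))) du ≤ C · t^{α−1} · a^{β+1−α} · (a+b)^{1−α−β} · (1 + a(a+b)/t)^{α−2} · exp(−a(a+b)/(4t)). -/
open MeasureTheory Real

/-! In the variables `q = b / a` and `X = a(a+b)/t` the factor `u + q` is comparable to `1 + q` on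
`(1/2, 1)`, and the exponent `X(1+q)u² / ((1-u)(u+q))` lies between `(X/4)/(1-u)` and
`X/(1-u) - X`. The substitution `x = Y/(1-u)` turns `∫ (1-u)^(-α) exp(-Y/(1-u)) du` into
`Y^(1-α) Γ(α-1, 2Y)`, and the upper incomplete Gamma function satisfies
`Γ(s, y) ≍ e^(-y) (1+y)^(s-1)` for `y ≥ 0` when `s > 0`. -/

lemma rpow_le_rpow_abs_mul_rpow {k x y p : ℝ} (hx : 0 < x) (hy : 0 < y)
    (hxy : x ≤ k * y) (hyx : y ≤ k * x) : x ^ p ≤ k ^ |p| * y ^ p := by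
  have hk : 0 < k := pos_of_mul_pos_left (hx.trans_le hxy) hy.le
  obtain hp | hp := le_total 0 p
  · rw [abs_of_nonneg hp, ← mul_rpow hk.le hy.le]
    exact rpow_le_rpow hx.le hxy hp
  · calc x ^ p ≤ (y / k) ^ p :=
          rpow_le_rpow_of_nonpos (by positivity) (by rwa [div_le_iff₀' hk]) hp
      _ = k ^ |p| * y ^ p := by
          rw [div_rpow hy.le hk.le, abs_of_nonpos hp, rpow_neg hk.le, div_eq_inv_mul]

/-- The upper incomplete Gamma function `Γ(s, y)`, whose asymptotics govern the integral.
The order of the factors is the one of `Real.Gamma_eq_integral`. -/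
noncomputable def incompleteGamma (s y : ℝ) : ℝ :=
  ∫ x in Set.Ioi y, exp (-x) * x ^ (s - 1)

section IncompleteGamma

variable {s y : ℝ}

lemma integrableOn_exp_neg_mul_rpow_Ioi (hs : 0 < s) (hy : 0 ≤ y) :
    IntegrableOn (fun x : ℝ ↦ exp (-x) * x ^ (s - 1)) (Set.Ioi y) :=
  (GammaIntegral_convergent hs).mono_set (Set.Ioi_subset_Ioi hy)

lemma incompleteGamma_le_Gamma (hs : 0 < s) (hy : 0 ≤ y) : incompleteGamma s y ≤ Gamma s := by
  rw [Gamma_eq_integral hs]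
  refine setIntegral_mono_set (GammaIntegral_convergent hs) ?_
    (Set.Ioi_subset_Ioi hy).eventuallyLE
  filter_upwards [ae_restrict_mem measurableSet_Ioi] with x (hx : 0 < x)
  positivity

lemma exists_mul_le_incompleteGamma (hs : 0 < s) :
    ∃ c : ℝ, 0 < c ∧ ∀ y : ℝ, 0 ≤ y →
      c * (exp (-y) * (1 + y) ^ (s - 1)) ≤ incompleteGamma s y := by
  refine ⟨exp (-2) * (2 ^ |s - 1|)⁻¹, by positivity, fun y hy ↦ ?_⟩
  set m := exp (-2) * (2 ^ |s - 1|)⁻¹ * (exp (-y) * (1 + y) ^ (s - 1))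
  have integrand_ge : ∀ x ∈ Set.Ioc (y + 1) (y + 2), m ≤ exp (-x) * x ^ (s - 1) := by
    intro x ⟨hx₁, hx₂⟩
    have exp_ge : exp (-2) * exp (-y) ≤ exp (-x) := by
      rw [← exp_add]
      exact exp_le_exp.mpr (by linarith)
    have rpow_ge : (2 ^ |s - 1|)⁻¹ * (1 + y) ^ (s - 1) ≤ x ^ (s - 1) := by
      rw [inv_mul_le_iff₀ (by positivity)]
      exact rpow_le_rpow_abs_mul_rpow (by linarith) (by linarith) (by linarith) (by linarith)
    calc m = exp (-2) * exp (-y) * ((2 ^ |s - 1|)⁻¹ * (1 + y) ^ (s - 1)) := by ring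
      _ ≤ exp (-x) * x ^ (s - 1) := by gcongr
  have subset : Set.Ioc (y + 1) (y + 2) ⊆ Set.Ioi y := fun x hx ↦ by
    have := hx.1
    simp only [Set.mem_Ioi]
    linarith
  have integrable := integrableOn_exp_neg_mul_rpow_Ioi hs hy
  calc m = m * volume.real (Set.Ioc (y + 1) (y + 2)) := by
        rw [volume_real_Ioc_of_le (by linarith)]; ring
    _ ≤ ∫ x in Set.Ioc (y + 1) (y + 2), exp (-x) * x ^ (s - 1) :=
        setIntegral_ge_of_const_le_real measurableSet_Ioc measure_Ioc_lt_top.ne integrand_ge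
          (integrable.mono_set subset)
    _ ≤ incompleteGamma s y := by
        refine setIntegral_mono_set integrable ?_ subset.eventuallyLE
        filter_upwards [ae_restrict_mem measurableSet_Ioi] with x (hx : y < x)
        have : 0 < x := hy.trans_lt hx
        positivity

lemma integrableOn_exp_neg_mul_sub_rpow_Ioi (hs : 0 < s) (hy : 0 ≤ y) (c : ℝ) :
    IntegrableOn (fun x : ℝ ↦ exp (-x) * (x - c) ^ (s - 1)) (Set.Ioi (y + c)) := by
  rw [← (measurePreserving_add_right volume c).integrableOn_comp_preimage
    (MeasurableEquiv.addRight c).measurableEmbedding]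
  simp only [Function.comp_def, Set.preimage_add_const_Ioi, add_sub_cancel_right, neg_add,
    exp_add, mul_right_comm]
  exact (integrableOn_exp_neg_mul_rpow_Ioi hs hy).mul_const (exp (-c))

lemma integral_exp_neg_mul_sub_rpow_Ioi (s y c : ℝ) :
    ∫ x in Set.Ioi (y + c), exp (-x) * (x - c) ^ (s - 1) = incompleteGamma s y * exp (-c) := by
  rw [← (measurePreserving_add_right volume c).setIntegral_preimage_emb
    (MeasurableEquiv.addRight c).measurableEmbedding, incompleteGamma, ← integral_mul_const]
  simp only [Set.preimage_add_const_Ioi, add_sub_cancel_right, neg_add, exp_add, mul_right_comm]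

lemma incompleteGamma_le_of_one_le (s : ℝ) (hy : 1 ≤ y) :
    incompleteGamma s y ≤ Gamma (|s - 1| + 1) * exp 1 * (exp (-y) * y ^ (s - 1)) := by
  set r := |s - 1| + 1 with hr
  have hr₀ : 0 < r := by positivity
  have integrand_le : ∀ x ∈ Set.Ioi y,
      exp (-x) * x ^ (s - 1) ≤ y ^ (s - 1) * (exp (-x) * (x - (y - 1)) ^ (r - 1)) := by
    intro x (hx : y < x)
    have le_mul : x ≤ (x - (y - 1)) * y := by
      linear_combination mul_nonneg (sub_nonneg.mpr hx.le) (sub_nonneg.mpr hy)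
    have mul_ge : y ≤ (x - (y - 1)) * x := by nlinarith
    have rpow_le : x ^ (s - 1) ≤ (x - (y - 1)) ^ |s - 1| * y ^ (s - 1) :=
      rpow_le_rpow_abs_mul_rpow (by linarith) (by linarith) le_mul mul_ge
    calc exp (-x) * x ^ (s - 1) ≤ exp (-x) * ((x - (y - 1)) ^ |s - 1| * y ^ (s - 1)) := by gcongr
      _ = y ^ (s - 1) * (exp (-x) * (x - (y - 1)) ^ (r - 1)) := by
          rw [hr, add_sub_cancel_right]; ring
  have shift : 1 + (y - 1) = y := by ring
  have integrable := integrableOn_exp_neg_mul_sub_rpow_Ioi hr₀ zero_le_one (y - 1)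
  have integral_eq := integral_exp_neg_mul_sub_rpow_Ioi r 1 (y - 1)
  rw [shift] at integrable integral_eq
  calc incompleteGamma s y
      ≤ ∫ x in Set.Ioi y, y ^ (s - 1) * (exp (-x) * (x - (y - 1)) ^ (r - 1)) := by
        refine integral_mono_of_nonneg ?_ (integrable.const_mul _)
          ((ae_restrict_mem measurableSet_Ioi).mono integrand_le)
        filter_upwards [ae_restrict_mem measurableSet_Ioi] with x (hx : y < x)
        have : 0 < x := by linarith
        positivity
    _ = y ^ (s - 1) * (incompleteGamma r 1 * exp (-(y - 1))) := by
        rw [integral_const_mul, integral_eq]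
    _ ≤ y ^ (s - 1) * (Gamma r * exp (-(y - 1))) := by
        gcongr
        exact incompleteGamma_le_Gamma hr₀ zero_le_one
    _ = Gamma r * exp 1 * (exp (-y) * y ^ (s - 1)) := by
        rw [neg_sub, exp_sub, exp_neg]; ring

lemma exists_incompleteGamma_le_mul (hs : 0 < s) :
    ∃ C : ℝ, 0 < C ∧ ∀ y : ℝ, 0 ≤ y →
      incompleteGamma s y ≤ C * (exp (-y) * (1 + y) ^ (s - 1)) := by
  have hΓ : 0 < Gamma s := Gamma_pos_of_pos hs
  set M := max (Gamma s) (Gamma (|s - 1| + 1))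
  have hM : 0 < M := lt_max_of_lt_left hΓ
  refine ⟨M * exp 1 * 2 ^ |s - 1|, by positivity, fun y hy ↦ ?_⟩
  obtain hy₁ | hy₁ := le_total y 1
  · have one_le_exp_mul : 1 ≤ exp 1 * exp (-y) := by
      rw [← exp_add]
      exact one_le_exp (by linarith)
    have one_le_rpow_mul : 1 ≤ 2 ^ |s - 1| * (1 + y) ^ (s - 1) := by
      simpa only [one_rpow] using rpow_le_rpow_abs_mul_rpow (x := 1) (p := s - 1) one_pos
        (by linarith : 0 < 1 + y) (by linarith) (by linarith)
    calc incompleteGamma s y ≤ M := (incompleteGamma_le_Gamma hs hy).trans (le_max_left _ _)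
      _ ≤ M * ((exp 1 * exp (-y)) * (2 ^ |s - 1| * (1 + y) ^ (s - 1))) :=
          le_mul_of_one_le_right hM.le
            (one_le_mul_of_one_le_of_one_le one_le_exp_mul one_le_rpow_mul)
      _ = M * exp 1 * 2 ^ |s - 1| * (exp (-y) * (1 + y) ^ (s - 1)) := by ring
  · calc incompleteGamma s y ≤ Gamma (|s - 1| + 1) * exp 1 * (exp (-y) * y ^ (s - 1)) :=
          incompleteGamma_le_of_one_le s hy₁
      _ ≤ M * exp 1 * (exp (-y) * (2 ^ |s - 1| * (1 + y) ^ (s - 1))) := by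
          gcongr
          · exact le_max_right _ _
          · exact rpow_le_rpow_abs_mul_rpow (by linarith) (by linarith) (by linarith)
              (by linarith)
      _ = M * exp 1 * 2 ^ |s - 1| * (exp (-y) * (1 + y) ^ (s - 1)) := by ring

end IncompleteGamma

section Substitution

variable {l r Y : ℝ}

lemma image_div_sub_Ioo (hlr : l < r) (hY : 0 < Y) :
    (fun u ↦ Y / (r - u)) '' Set.Ioo l r = Set.Ioi (Y / (r - l)) := by
  ext x
  simp only [Set.mem_image, Set.mem_Ioo, Set.mem_Ioi]
  constructor
  · rintro ⟨u, ⟨hlu, hur⟩, rfl⟩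
    exact div_lt_div_of_pos_left hY (by linarith) (by linarith)
  · intro hx
    have hx₀ : 0 < x := lt_trans (div_pos hY (sub_pos.mpr hlr)) hx
    have hYx : 0 < Y / x := by positivity
    have : Y / x < r - l := (div_lt_comm₀ (sub_pos.mpr hlr) hx₀).mp hx
    exact ⟨r - Y / x, ⟨by linarith, by linarith⟩, by rw [sub_sub_cancel, div_div_cancel₀ hY.ne']⟩

lemma injOn_div_sub_Ioo (hY : Y ≠ 0) : Set.InjOn (fun u ↦ Y / (r - u)) (Set.Ioo l r) := by
  intro u _ v _ huv
  simpa [div_eq_mul_inv, hY] using huv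

lemma hasDerivAt_div_sub {u : ℝ} (hu : u ≠ r) (Y : ℝ) :
    HasDerivAt (fun u ↦ Y / (r - u)) (Y / (r - u) ^ 2) u := by
  have hru : r - u ≠ 0 := sub_ne_zero.mpr hu.symm
  simpa using (hasDerivAt_const u Y).fun_div ((hasDerivAt_id u).const_sub r) hru

lemma abs_deriv_div_sub_smul (hY : 0 < Y) (α : ℝ) {u : ℝ} (hu : u < r) :
    |Y / (r - u) ^ 2| • (exp (-(Y / (r - u))) * (Y / (r - u)) ^ (α - 1 - 1)) =
      Y ^ (α - 1) * ((r - u) ^ (-α) * exp (-(Y / (r - u)))) := by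
  have hv : 0 < r - u := sub_pos.mpr hu
  have hα : α = α - 1 - 1 + 2 := by ring
  rw [abs_of_pos (by positivity), smul_eq_mul, div_rpow hY.le hv.le, rpow_sub_one hY.ne' (α - 1),
    rpow_neg hv.le, hα, rpow_add hv, ← hα, rpow_two]
  field_simp

lemma integrableOn_rpow_neg_mul_exp_neg_div (hlr : l < r) {α : ℝ} (hα : 1 < α) (hY : 0 < Y) :
    IntegrableOn (fun u ↦ (r - u) ^ (-α) * exp (-(Y / (r - u)))) (Set.Ioo l r) := by
  have h := integrableOn_exp_neg_mul_rpow_Ioi (sub_pos.mpr hα)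
    (div_pos hY (sub_pos.mpr hlr)).le
  rw [← image_div_sub_Ioo hlr hY, integrableOn_image_iff_integrableOn_abs_deriv_smul
    measurableSet_Ioo (fun u hu ↦ (hasDerivAt_div_sub hu.2.ne Y).hasDerivWithinAt)
    (injOn_div_sub_Ioo hY.ne'), integrableOn_congr_fun
    (fun u hu ↦ abs_deriv_div_sub_smul hY α hu.2) measurableSet_Ioo] at h
  exact (integrable_const_mul_iff (by simp [(rpow_pos_of_pos hY _).ne']) _).mp h

lemma integral_rpow_neg_mul_exp_neg_div (hlr : l < r) (α : ℝ) (hY : 0 < Y) :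
    ∫ u in Set.Ioo l r, (r - u) ^ (-α) * exp (-(Y / (r - u))) =
      Y ^ (1 - α) * incompleteGamma (α - 1) (Y / (r - l)) := by
  rw [incompleteGamma, ← image_div_sub_Ioo hlr hY, integral_image_eq_integral_abs_deriv_smul
    measurableSet_Ioo (fun u hu ↦ (hasDerivAt_div_sub hu.2.ne Y).hasDerivWithinAt)
    (injOn_div_sub_Ioo hY.ne'), setIntegral_congr_fun measurableSet_Ioo
    (fun u hu ↦ abs_deriv_div_sub_smul hY α hu.2), integral_const_mul, ← mul_assoc,
    ← rpow_add hY]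
  simp

end Substitution

/-- The integrand of the theorem in the scale-free variables `q = b / a` and
`X = a * (a + b) / t`, which are all the integral depends on. -/
noncomputable def scaledIntegrand (α β q X u : ℝ) : ℝ :=
  (1 - u) ^ (-α) * (u + q) ^ (-β) * exp (-(X * (1 + q) * u ^ 2 / ((1 - u) * (u + q))))

section ScaledIntegrand

variable {α q X u : ℝ}

lemma scaledIntegrand_nonneg (α β X : ℝ) (hq : 0 ≤ q) (hu : u ∈ Set.Icc 0 1) :
    0 ≤ scaledIntegrand α β q X u := by
  have : 0 ≤ 1 - u := sub_nonneg.mpr hu.2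
  have : 0 ≤ u + q := add_nonneg hu.1 hq
  unfold scaledIntegrand
  positivity

lemma div_four_div_le_exponent (hq : 0 ≤ q) (hX : 0 ≤ X) (hu : u ∈ Set.Ioo (1 / 2) 1) :
    X / 4 / (1 - u) ≤ X * (1 + q) * u ^ 2 / ((1 - u) * (u + q)) := by
  obtain ⟨hu₀, hu₁⟩ := hu
  have hw : 0 < u + q := by linarith
  have quarter_le : 1 / 4 ≤ (1 + q) * u ^ 2 / (u + q) := by
    have : 1 / 4 ≤ u ^ 2 := by nlinarith
    rw [le_div_iff₀ hw]
    nlinarith [mul_le_mul_of_nonneg_left this (by linarith : 0 ≤ 1 + q)]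
  calc X / 4 / (1 - u) = X / (1 - u) * (1 / 4) := by ring
    _ ≤ X / (1 - u) * ((1 + q) * u ^ 2 / (u + q)) := by gcongr
    _ = X * (1 + q) * u ^ 2 / ((1 - u) * (u + q)) := by field_simp

lemma exponent_le_div_sub (hq : 0 ≤ q) (hX : 0 ≤ X) (hu : u ∈ Set.Ioo 0 1) :
    X * (1 + q) * u ^ 2 / ((1 - u) * (u + q)) ≤ X / (1 - u) - X := by
  obtain ⟨hu₀, hu₁⟩ := hu
  have hv : 0 < 1 - u := by linarith
  have hw : 0 < u + q := by linarith
  have le_self : (1 + q) * u ^ 2 / (u + q) ≤ u := by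
    rw [div_le_iff₀ hw]
    nlinarith [mul_nonneg (mul_nonneg hq hu₀.le) hv.le]
  calc X * (1 + q) * u ^ 2 / ((1 - u) * (u + q))
      = X / (1 - u) * ((1 + q) * u ^ 2 / (u + q)) := by field_simp
    _ ≤ X / (1 - u) * u := by gcongr
    _ = X / (1 - u) - X := by field_simp; ring

lemma scaledIntegrand_le (α β : ℝ) (hq : 0 ≤ q) (hX : 0 ≤ X) (hu : u ∈ Set.Ioo (1 / 2) 1) :
    scaledIntegrand α β q X u ≤
      2 ^ |β| * (1 + q) ^ (-β) * ((1 - u) ^ (-α) * exp (-(X / 4 / (1 - u)))) := by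
  have hv : 0 < 1 - u := sub_pos.mpr hu.2
  have exponent_ge := div_four_div_le_exponent hq hX hu
  have rpow_le : (u + q) ^ (-β) ≤ 2 ^ |β| * (1 + q) ^ (-β) := by
    rw [← abs_neg β]
    apply rpow_le_rpow_abs_mul_rpow <;> linarith [hu.1, hu.2]
  calc scaledIntegrand α β q X u
      ≤ (1 - u) ^ (-α) * (2 ^ |β| * (1 + q) ^ (-β)) * exp (-(X / 4 / (1 - u))) := by
        unfold scaledIntegrand
        gcongr
    _ = 2 ^ |β| * (1 + q) ^ (-β) * ((1 - u) ^ (-α) * exp (-(X / 4 / (1 - u)))) := by ring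

lemma le_scaledIntegrand (α β : ℝ) (hq : 0 ≤ q) (hX : 0 ≤ X) (hu : u ∈ Set.Ioo (1 / 2) 1) :
    (2 ^ |β|)⁻¹ * (1 + q) ^ (-β) * exp X * ((1 - u) ^ (-α) * exp (-(X / (1 - u)))) ≤
      scaledIntegrand α β q X u := by
  have hv : 0 < 1 - u := sub_pos.mpr hu.2
  have hw : 0 < u + q := by linarith [hu.1]
  have rpow_ge : (2 ^ |β|)⁻¹ * (1 + q) ^ (-β) ≤ (u + q) ^ (-β) := by
    rw [inv_mul_le_iff₀ (by positivity), ← abs_neg β]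
    apply rpow_le_rpow_abs_mul_rpow <;> linarith [hu.1, hu.2]
  have exponent_le := exponent_le_div_sub hq hX (Set.Ioo_subset_Ioo_left one_half_pos.le hu)
  calc (2 ^ |β|)⁻¹ * (1 + q) ^ (-β) * exp X * ((1 - u) ^ (-α) * exp (-(X / (1 - u))))
      = (1 - u) ^ (-α) * ((2 ^ |β|)⁻¹ * (1 + q) ^ (-β)) * exp (-(X / (1 - u) - X)) := by
        rw [neg_sub, exp_sub, exp_neg]; ring
    _ ≤ scaledIntegrand α β q X u := by
        unfold scaledIntegrand
        gcongr

lemma integrableOn_scaledIntegrand (hα : 1 < α) (β : ℝ) (hq : 0 ≤ q) (hX : 0 < X) :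
    IntegrableOn (scaledIntegrand α β q X) (Set.Ioo (1 / 2) 1) := by
  have dominating := (integrableOn_rpow_neg_mul_exp_neg_div one_half_lt_one hα
    (by positivity : 0 < X / 4)).const_mul (2 ^ |β| * (1 + q) ^ (-β))
  refine Integrable.mono' dominating ?_ ?_
  · unfold scaledIntegrand
    exact Measurable.aestronglyMeasurable (by fun_prop)
  · filter_upwards [ae_restrict_mem measurableSet_Ioo] with u hu
    rw [norm_of_nonneg (scaledIntegrand_nonneg α β X hq ⟨by linarith [hu.1], hu.2.le⟩)]
    exact scaledIntegrand_le α β hq hX.le hu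

lemma integral_scaledIntegrand_le_incompleteGamma (hα : 1 < α) (β : ℝ) (hq : 0 ≤ q)
    (hX : 0 < X) :
    ∫ u in Set.Ioo (1 / 2) 1, scaledIntegrand α β q X u ≤
      2 ^ |β| * (1 + q) ^ (-β) * ((X / 4) ^ (1 - α) * incompleteGamma (α - 1) (X / 2)) := by
  have hX₄ : 0 < X / 4 := by positivity
  have dominating := (integrableOn_rpow_neg_mul_exp_neg_div one_half_lt_one hα
    hX₄).const_mul (2 ^ |β| * (1 + q) ^ (-β))
  have endpoint : X / 4 / (1 - 1 / 2) = X / 2 := by ring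
  rw [← endpoint, ← integral_rpow_neg_mul_exp_neg_div one_half_lt_one α hX₄, ← integral_const_mul]
  exact setIntegral_mono_on (integrableOn_scaledIntegrand hα β hq hX) dominating measurableSet_Ioo
    fun u hu ↦ scaledIntegrand_le α β hq hX.le hu

lemma incompleteGamma_le_integral_scaledIntegrand (hα : 1 < α) (β : ℝ) (hq : 0 ≤ q)
    (hX : 0 < X) :
    (2 ^ |β|)⁻¹ * (1 + q) ^ (-β) * exp X * (X ^ (1 - α) * incompleteGamma (α - 1) (2 * X)) ≤
      ∫ u in Set.Ioo (1 / 2) 1, scaledIntegrand α β q X u := by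
  have dominated := (integrableOn_rpow_neg_mul_exp_neg_div one_half_lt_one hα
    hX).const_mul ((2 ^ |β|)⁻¹ * (1 + q) ^ (-β) * exp X)
  have endpoint : X / (1 - 1 / 2) = 2 * X := by ring
  rw [← endpoint, ← integral_rpow_neg_mul_exp_neg_div one_half_lt_one α hX, ← integral_const_mul]
  exact setIntegral_mono_on dominated (integrableOn_scaledIntegrand hα β hq hX) measurableSet_Ioo
    fun u hu ↦ le_scaledIntegrand α β hq hX.le hu

theorem exists_integral_scaledIntegrand_le (hα : 1 < α) (β : ℝ) :
    ∃ C : ℝ, 0 < C ∧ ∀ q X : ℝ, 0 ≤ q → 0 < X →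
      ∫ u in Set.Ioo (1 / 2) 1, scaledIntegrand α β q X u ≤
        C * ((1 + q) ^ (-β) * X ^ (1 - α) * (1 + X) ^ (α - 2) * exp (-X / 2)) := by
  obtain ⟨C, hC, incompleteGamma_le⟩ := exists_incompleteGamma_le_mul (sub_pos.mpr hα)
  refine ⟨2 ^ |β| * 4 ^ (α - 1) * C * 2 ^ |α - 2|, by positivity, fun q X hq hX ↦ ?_⟩
  have rpow_le : (1 + X / 2) ^ (α - 1 - 1) ≤ 2 ^ |α - 2| * (1 + X) ^ (α - 2) := by
    rw [show α - 1 - 1 = α - 2 by ring]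
    apply rpow_le_rpow_abs_mul_rpow <;> linarith
  have div_four_rpow : (X / 4) ^ (1 - α) = 4 ^ (α - 1) * X ^ (1 - α) := by
    rw [div_rpow hX.le four_pos.le, ← neg_sub α 1, rpow_neg four_pos.le, div_inv_eq_mul, mul_comm]
  calc ∫ u in Set.Ioo (1 / 2) 1, scaledIntegrand α β q X u
      ≤ 2 ^ |β| * (1 + q) ^ (-β) * ((X / 4) ^ (1 - α) * incompleteGamma (α - 1) (X / 2)) :=
        integral_scaledIntegrand_le_incompleteGamma hα β hq hX
    _ ≤ 2 ^ |β| * (1 + q) ^ (-β) * ((X / 4) ^ (1 - α) *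
          (C * (exp (-(X / 2)) * (2 ^ |α - 2| * (1 + X) ^ (α - 2))))) := by
        gcongr
        exact (incompleteGamma_le (X / 2) (by positivity)).trans (by gcongr)
    _ = _ := by rw [div_four_rpow, neg_div]; ring

theorem exists_le_integral_scaledIntegrand (hα : 1 < α) (β : ℝ) :
    ∃ c : ℝ, 0 < c ∧ ∀ q X : ℝ, 0 ≤ q → 0 < X →
      c * ((1 + q) ^ (-β) * X ^ (1 - α) * (1 + X) ^ (α - 2) * exp (-X)) ≤
        ∫ u in Set.Ioo (1 / 2) 1, scaledIntegrand α β q X u := by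
  obtain ⟨c, hc, le_incompleteGamma⟩ := exists_mul_le_incompleteGamma (sub_pos.mpr hα)
  refine ⟨(2 ^ |β|)⁻¹ * c * (2 ^ |α - 2|)⁻¹, by positivity, fun q X hq hX ↦ ?_⟩
  have rpow_ge : (2 ^ |α - 2|)⁻¹ * (1 + X) ^ (α - 2) ≤ (1 + 2 * X) ^ (α - 1 - 1) := by
    rw [show α - 1 - 1 = α - 2 by ring, inv_mul_le_iff₀ (by positivity)]
    apply rpow_le_rpow_abs_mul_rpow <;> linarith
  have exp_eq : exp (-X) = exp X * exp (-(2 * X)) := by rw [← exp_add]; ring_nf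
  calc (2 ^ |β|)⁻¹ * c * (2 ^ |α - 2|)⁻¹ *
        ((1 + q) ^ (-β) * X ^ (1 - α) * (1 + X) ^ (α - 2) * exp (-X))
      = (2 ^ |β|)⁻¹ * (1 + q) ^ (-β) * exp X * (X ^ (1 - α) *
          (c * (exp (-(2 * X)) * ((2 ^ |α - 2|)⁻¹ * (1 + X) ^ (α - 2))))) := by
        rw [exp_eq]; ring
    _ ≤ (2 ^ |β|)⁻¹ * (1 + q) ^ (-β) * exp X *
          (X ^ (1 - α) * incompleteGamma (α - 1) (2 * X)) := by
        gcongr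
        exact le_trans (by gcongr) (le_incompleteGamma (2 * X) (by positivity))
    _ ≤ ∫ u in Set.Ioo (1 / 2) 1, scaledIntegrand α β q X u :=
        incompleteGamma_le_integral_scaledIntegrand hα β hq hX

end ScaledIntegrand

section Scaling

variable {a b t : ℝ}

lemma scaledIntegrand_div_eq (α β : ℝ) (ha : a ≠ 0) (b t u : ℝ) :
    scaledIntegrand α β (b / a) (a * (a + b) / t) u =
      (1 - u) ^ (-α) * (u + b / a) ^ (-β) *
        exp (-((a + b) ^ 2 * u ^ 2) / ((1 - u) * t * (u + b / a))) := by
  have scale : a * (a + b) / t * (1 + b / a) = (a + b) ^ 2 / t := by field_simp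
  rw [scaledIntegrand, scale, neg_div, div_mul_eq_mul_div, div_div, mul_left_comm, ← mul_assoc]

lemma one_add_div_rpow_mul_rpow (α β : ℝ) (ha : 0 < a) (hab : 0 < a + b) (ht : 0 < t) :
    (1 + b / a) ^ (-β) * (a * (a + b) / t) ^ (1 - α) =
      t ^ (α - 1) * a ^ (β + 1 - α) * (a + b) ^ (1 - α - β) := by
  rw [one_add_div ha.ne', div_rpow hab.le ha.le, div_rpow (by positivity) ht.le,
    mul_rpow ha.le hab.le, rpow_neg ha.le, add_sub_assoc, rpow_add ha, sub_eq_add_neg _ β,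
    rpow_add hab, ← neg_sub 1 α, rpow_neg ht.le]
  field_simp

end Scaling

theorem stmt7_general (α β : ℝ) (hα : 1 < α) :
    ∃ c C : ℝ, 0 < c ∧ 0 < C ∧ ∀ a b t : ℝ, 0 < a → 0 ≤ b → 0 < t →
      c * t ^ (α - 1) * a ^ (β + 1 - α) * (a + b) ^ (1 - α - β) *
          (1 + a * (a + b) / t) ^ (α - 2) * Real.exp (-2 * a * (a + b) / t) ≤
        (∫ u in Set.Ioo (1 / 2 : ℝ) 1,
          (1 - u) ^ (-α) * (u + b / a) ^ (-β) *
            Real.exp (-((a + b) ^ 2 * u ^ 2) / ((1 - u) * t * (u + b / a)))) ∧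
      (∫ u in Set.Ioo (1 / 2 : ℝ) 1,
          (1 - u) ^ (-α) * (u + b / a) ^ (-β) *
            Real.exp (-((a + b) ^ 2 * u ^ 2) / ((1 - u) * t * (u + b / a)))) ≤
        C * t ^ (α - 1) * a ^ (β + 1 - α) * (a + b) ^ (1 - α - β) *
          (1 + a * (a + b) / t) ^ (α - 2) * Real.exp (-a * (a + b) / (4 * t)) := by
  obtain ⟨c, hc, lower⟩ := exists_le_integral_scaledIntegrand hα β
  obtain ⟨C, hC, upper⟩ := exists_integral_scaledIntegrand_le hα β
  refine ⟨c, C, hc, hC, fun a b t ha hb ht ↦ ?_⟩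
  set X := a * (a + b) / t with hX
  have hX₀ : 0 < X := by positivity
  have prefactor := one_add_div_rpow_mul_rpow α β ha (by positivity : 0 < a + b) ht
  have exp_lower : -2 * a * (a + b) / t ≤ -X := by linear_combination hX₀.le + 2 * hX
  have exp_upper : -X / 2 ≤ -a * (a + b) / (4 * t) := by linear_combination hX₀.le / 4 + hX / 4
  specialize lower (b / a) X (by positivity) hX₀
  specialize upper (b / a) X (by positivity) hX₀
  simp only [hX, scaledIntegrand_div_eq α β ha.ne', prefactor, ← mul_assoc] at lower upper
  simp only [← hX] at lower upper
  exact ⟨le_trans (by gcongr) lower, upper.trans (by gcongr)⟩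

/-- For fixed `α, β > 3/2` there are constants `c, C > 0` depending only on `α, β` such that
for all `a, b, t > 0` the integral
`J⁽²⁾ = ∫_{1/2}^{1} (1−u)^(−α) (u+b/a)^(−β) exp(−(a+b)²u²/((1−u)t(u+b/a))) du` satisfies
`c t^{α−1} a^{β+1−α} (a+b)^{1−α−β} (1+a(a+b)/t)^{α−2} exp(−2a(a+b)/t) ≤ J⁽²⁾`
`≤ C t^{α−1} a^{β+1−α} (a+b)^{1−α−β} (1+a(a+b)/t)^{α−2} exp(−a(a+b)/(4t))`. -/
theorem stmt7 (α β : ℝ) (hα : 3 / 2 < α) (hβ : 3 / 2 < β) :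
    ∃ c C : ℝ, 0 < c ∧ 0 < C ∧ ∀ a b t : ℝ, 0 < a → 0 < b → 0 < t →
      c * t ^ (α - 1) * a ^ (β + 1 - α) * (a + b) ^ (1 - α - β) *
          (1 + a * (a + b) / t) ^ (α - 2) * Real.exp (-2 * a * (a + b) / t) ≤
        (∫ u in Set.Ioo (1 / 2 : ℝ) 1,
          (1 - u) ^ (-α) * (u + b / a) ^ (-β) *
            Real.exp (-((a + b) ^ 2 * u ^ 2) / ((1 - u) * t * (u + b / a)))) ∧
      (∫ u in Set.Ioo (1 / 2 : ℝ) 1,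
          (1 - u) ^ (-α) * (u + b / a) ^ (-β) *
            Real.exp (-((a + b) ^ 2 * u ^ 2) / ((1 - u) * t * (u + b / a)))) ≤
        C * t ^ (α - 1) * a ^ (β + 1 - α) * (a + b) ^ (1 - α - β) *
          (1 + a * (a + b) / t) ^ (α - 2) * Real.exp (-a * (a + b) / (4 * t)) := by
  obtain ⟨c, C, hc, hC, bounds⟩ := stmt7_general α β (by linarith)
  exact ⟨c, C, hc, hC, fun a b t ha hb ht ↦ bounds a b t ha hb.le ht⟩
end
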